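/- (Necessary integrability) Let (𝒳,d) be a Polish metric space, let θ : [0,∞) → [0,∞) be a convex increasing bijection and α : [0,∞) → [0,∞) an increasing bijection. If μ ∈ P(𝒳) satisfies α(𝒯_{θ∘d}(ν,μ)) ≤ H(ν|μ) for all ν ∈ P(𝒳) (where the cost is c(x,y) = θ(d(x,y))), then for every x₀ ∈ 𝒳 there exists ε₀ > 0 such that for all 0 < ε ≤ ε₀, ∫_𝒳 exp( α(θ(ε d(x,x₀))) ) dμ(x) < ∞. -/

import Mathlib

open MeasureTheory ENNReal

/-- The optimal transport cost `𝒯_c(ν, μ)` associated with the cost function `c`: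
the infimum of `∫ c dπ` over all couplings `π` of `ν` and `μ`. -/
noncomputable def optCost {X : Type*} [MeasurableSpace X] (c : X → X → ℝ)
    (ν μ : Measure X) : ℝ≥0∞ :=
  ⨅ (π : Measure (X × X)) (_ : π.map Prod.fst = ν ∧ π.map Prod.snd = μ),
    ∫⁻ p, ENNReal.ofReal (c p.1 p.2) ∂π

open Classical in
/-- The relative entropy `H(ν|μ)`: it equals `∫ h(dν/dμ) dμ` with
`h(t) = t log t - t + 1 ≥ 0` if `ν ≪ μ`, and `+∞` otherwise.  For probability
measures `ν ≪ μ` this coincides with `∫ log (dν/dμ) dν`. -/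
noncomputable def relEntropy {X : Type*} [MeasurableSpace X] (ν μ : Measure X) : ℝ≥0∞ :=
  if ν ≪ μ then
    ∫⁻ x, ENNReal.ofReal ((ν.rnDeriv μ x).toReal * Real.log (ν.rnDeriv μ x).toReal
      - (ν.rnDeriv μ x).toReal + 1) ∂μ
  else ∞

/-- The natural extension to `ℝ≥0∞` of a function `α : [0,∞) → [0,∞)`.
For an increasing `α` and `x < ∞` it equals `ENNReal.ofReal (α x.toReal)`,
and at `x = ∞` it is the limit of `α` at `+∞` (so `∞` when `α` is unbounded). -/
noncomputable def extRealFun (α : ℝ → ℝ) (x : ℝ≥0∞) : ℝ≥0∞ :=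
  ⨆ (t : ℝ) (_ : 0 ≤ t ∧ ENNReal.ofReal t ≤ x), ENNReal.ofReal (α t)

/-!
Testing the inequality on the mixture `ν = s • μ[|A] + (1 - s) • μ`, with `A = {r ≤ d(·, x₀)}`,
bounds the tail of `d(·, x₀)`. By convexity `H(ν|μ) ≤ -s log μ(A)`, while every coupling of `ν` and
`μ` has mass at least `s - μ(Bᶜ)` on `A × B`, for `B` a large ball around `x₀`; hence
`𝒯(ν, μ) ≥ θ(r/2) (s - μ(Bᶜ)) ≥ θ(δr/2)` as soon as `θ(δt) ≤ κ θ(t)` with `κ < s` (for `θ` convex,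
`δ = κ = 1/2`). Conditioning alone, `s = 1`, yields only `μ(A) ≤ exp (-α(θ(δr/2)))`, which is not
enough to integrate `exp (α(θ(δ d(·, x₀)/2)))`; with `s < 1` the exponent gains a factor `1/s > 1`.
-/

open Filter InformationTheory Metric ProbabilityTheory Set
open scoped NNReal Topology

section RelativeEntropy

variable {X : Type*} [MeasurableSpace X]

lemma relEntropy_eq_klDiv (ν μ : Measure X) [IsFiniteMeasure ν] [IsFiniteMeasure μ] :
    relEntropy ν μ = klDiv ν μ := by
  simp only [relEntropy, klDiv_eq_lintegral_klFun, klFun_apply, sub_add_eq_add_sub]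

lemma klDiv_smul_add_smul_le {ν₁ ν₂ μ : Measure X} [IsFiniteMeasure ν₁] [IsFiniteMeasure ν₂]
    [IsFiniteMeasure μ] (h₁ : ν₁ ≪ μ) (h₂ : ν₂ ≪ μ) {a b : ℝ≥0} (hab : a + b = 1) :
    klDiv (a • ν₁ + b • ν₂) μ ≤ a * klDiv ν₁ μ + b * klDiv ν₂ μ := by
  have h_ac : a • ν₁ + b • ν₂ ≪ μ := (h₁.smul_left a).add_left (h₂.smul_left b)
  rw [klDiv_eq_lintegral_klFun_of_ac h_ac, klDiv_eq_lintegral_klFun_of_ac h₁,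
    klDiv_eq_lintegral_klFun_of_ac h₂, ← lintegral_const_mul _ (by fun_prop),
    ← lintegral_const_mul _ (by fun_prop), ← lintegral_add_left (by fun_prop)]
  refine lintegral_mono_ae ?_
  filter_upwards [Measure.rnDeriv_add (a • ν₁) (b • ν₂) μ, Measure.rnDeriv_smul_left ν₁ μ a,
    Measure.rnDeriv_smul_left ν₂ μ b, ν₁.rnDeriv_lt_top μ, ν₂.rnDeriv_lt_top μ]
    with x h_add h_smul₁ h_smul₂ h_top₁ h_top₂
  have h_density : ((a • ν₁ + b • ν₂).rnDeriv μ x).toReal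
      = a * (ν₁.rnDeriv μ x).toReal + b * (ν₂.rnDeriv μ x).toReal := by
    rw [h_add, Pi.add_apply, h_smul₁, h_smul₂, Pi.smul_apply, Pi.smul_apply, ENNReal.smul_def,
      ENNReal.smul_def, smul_eq_mul, smul_eq_mul,
      ENNReal.toReal_add (by finiteness) (by finiteness), ENNReal.toReal_mul, ENNReal.toReal_mul,
      ENNReal.coe_toReal, ENNReal.coe_toReal]
  have h_convex := convexOn_klFun.2 (ENNReal.toReal_nonneg (a := ν₁.rnDeriv μ x))
    (ENNReal.toReal_nonneg (a := ν₂.rnDeriv μ x)) a.coe_nonneg b.coe_nonneg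
    (by exact_mod_cast hab)
  rw [h_density]
  refine (ENNReal.ofReal_le_ofReal h_convex).trans (ENNReal.ofReal_add_le.trans_eq ?_)
  rw [smul_eq_mul, smul_eq_mul, ENNReal.ofReal_mul a.coe_nonneg, ENNReal.ofReal_mul b.coe_nonneg,
    ENNReal.ofReal_coe_nnreal, ENNReal.ofReal_coe_nnreal]

lemma klDiv_cond (μ : Measure X) [IsProbabilityMeasure μ] {A : Set X}
    (hA : MeasurableSet A) (hA₀ : μ A ≠ 0) :
    klDiv μ[|A] μ = ENNReal.ofReal (-Real.log (μ.real A)) := by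
  have := cond_isProbabilityMeasure hA₀
  have h_llr : llr μ[|A] μ =ᵐ[μ[|A]] fun _ => -Real.log (μ.real A) := by
    have h_density : μ[|A].rnDeriv μ =ᵐ[μ] (μ A)⁻¹ • A.indicator 1 :=
      (Measure.rnDeriv_smul_left_of_ne_top _ _ (ENNReal.inv_ne_top.2 hA₀)).trans
        ((Measure.rnDeriv_restrict_self μ hA).const_smul _)
    filter_upwards [cond_absolutelyContinuous.ae_le h_density, ae_cond_mem hA] with x hx hxA
    simp [llr, hx, hxA, Measure.real]
  rw [klDiv_of_ac_of_integrable cond_absolutelyContinuous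
    ((integrable_const _).congr h_llr.symm), integral_congr_ae h_llr]
  simp

lemma klDiv_smul_cond_add_smul_self_le (μ : Measure X) [IsProbabilityMeasure μ] {A : Set X}
    (hA : MeasurableSet A) (hA₀ : μ A ≠ 0) {s : ℝ≥0} (hs : s ≤ 1) :
    klDiv (s • μ[|A] + (1 - s) • μ) μ ≤ ENNReal.ofReal (s * -Real.log (μ.real A)) := by
  have h_mix := klDiv_smul_add_smul_le (cond_absolutelyContinuous (μ := μ) (s := A))
    Measure.AbsolutelyContinuous.rfl (add_tsub_cancel_of_le hs)
  rw [klDiv_cond μ hA hA₀, klDiv_self, mul_zero, add_zero] at h_mix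
  rwa [ENNReal.ofReal_mul s.coe_nonneg, ENNReal.ofReal_coe_nnreal]

end RelativeEntropy

section Transport

variable {X : Type*} [MeasurableSpace X]

lemma ofReal_mul_sub_le_optCost {c : X → X → ℝ} {ν μ : Measure X} {A B : Set X}
    (hA : MeasurableSet A) (hB : MeasurableSet B) {m : ℝ} (hm : ∀ x ∈ A, ∀ y ∈ B, m ≤ c x y) :
    ENNReal.ofReal m * (ν A - μ Bᶜ) ≤ optCost c ν μ := by
  refine le_iInf₂ fun π ⟨h_fst, h_snd⟩ => ?_
  have h_mass : ν A - μ Bᶜ ≤ π (A ×ˢ B) := by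
    rw [← h_fst, ← h_snd, Measure.map_apply measurable_fst hA,
      Measure.map_apply measurable_snd hB.compl, Set.prod_eq, ← sdiff_compl, ← preimage_compl]
    exact le_measure_sdiff
  calc ENNReal.ofReal m * (ν A - μ Bᶜ)
      ≤ ENNReal.ofReal m * π (A ×ˢ B) := by gcongr
    _ = ∫⁻ _ in A ×ˢ B, ENNReal.ofReal m ∂π := (setLIntegral_const _ _).symm
    _ ≤ ∫⁻ p in A ×ˢ B, ENNReal.ofReal (c p.1 p.2) ∂π :=
        setLIntegral_mono' (hA.prod hB) fun p hp => ENNReal.ofReal_le_ofReal (hm _ hp.1 _ hp.2)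
    _ ≤ ∫⁻ p, ENNReal.ofReal (c p.1 p.2) ∂π := setLIntegral_le_lintegral _ _

/-- The transport-entropy inequality `α(𝒯_c(·, μ)) ≤ H(·|μ)` on probability measures, the hypothesis
from which tail bounds for `μ` are derived. As in `extRealFun`, only the values of `α` on `[0, ∞)`
matter. -/
def TransportEntropyInequality (α : ℝ → ℝ) (c : X → X → ℝ) (μ : Measure X) : Prop :=
  ∀ ν : Measure X, IsProbabilityMeasure ν → extRealFun α (optCost c ν μ) ≤ relEntropy ν μ

lemma ofReal_le_extRealFun (α : ℝ → ℝ) {t : ℝ} (ht : 0 ≤ t) {x : ℝ≥0∞}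
    (htx : ENNReal.ofReal t ≤ x) : ENNReal.ofReal (α t) ≤ extRealFun α x :=
  le_iSup₂_of_le t ⟨ht, htx⟩ le_rfl

lemma TransportEntropyInequality.measureReal_le_exp {α : ℝ → ℝ} {c : X → X → ℝ} {μ : Measure X}
    [IsProbabilityMeasure μ] (h : TransportEntropyInequality α c μ) {A B : Set X}
    (hA : MeasurableSet A) (hB : MeasurableSet B) {m : ℝ} (hm₀ : 0 ≤ m)
    (hm : ∀ x ∈ A, ∀ y ∈ B, m ≤ c x y) {s : ℝ≥0} (hs₀ : 0 < s) (hs₁ : s ≤ 1) {t : ℝ}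
    (ht : 0 ≤ t) (htm : t ≤ m * (s - μ.real Bᶜ)) :
    μ.real A ≤ Real.exp (-(α t / s)) := by
  rcases eq_or_ne (μ A) 0 with hA₀ | hA₀
  · simpa [Measure.real, hA₀] using (Real.exp_pos _).le
  have := cond_isProbabilityMeasure hA₀
  have hpos : 0 < μ.real A := ENNReal.toReal_pos hA₀ (measure_ne_top μ A)
  have h_log : Real.log (μ.real A) ≤ 0 := Real.log_nonpos hpos.le measureReal_le_one
  set ν : Measure X := s • μ[|A] + (1 - s) • μ with hν
  have hν_prob : IsProbabilityMeasure ν := ⟨by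
    rw [hν, Measure.add_apply, Measure.coe_nnreal_smul_apply, Measure.coe_nnreal_smul_apply,
      measure_univ, measure_univ, mul_one, mul_one, ← ENNReal.coe_add, add_tsub_cancel_of_le hs₁,
      ENNReal.coe_one]⟩
  have h_entropy : relEntropy ν μ ≤ ENNReal.ofReal (s * -Real.log (μ.real A)) := by
    rw [relEntropy_eq_klDiv]
    exact klDiv_smul_cond_add_smul_self_le μ hA hA₀ hs₁
  have h_mass : (s : ℝ≥0∞) ≤ ν A := by
    rw [hν, Measure.add_apply, Measure.coe_nnreal_smul_apply,
      cond_apply_self hA₀ (measure_ne_top μ A), mul_one]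
    exact le_self_add
  have h_cost : ENNReal.ofReal t ≤ optCost c ν μ :=
    calc ENNReal.ofReal t ≤ ENNReal.ofReal m * (s - μ Bᶜ) := by
          rw [← ENNReal.ofReal_coe_nnreal, ← ofReal_measureReal (μ := μ) (s := Bᶜ),
            ← ENNReal.ofReal_sub _ measureReal_nonneg, ← ENNReal.ofReal_mul hm₀]
          exact ENNReal.ofReal_le_ofReal htm
      _ ≤ ENNReal.ofReal m * (ν A - μ Bᶜ) := by gcongr
      _ ≤ optCost c ν μ := ofReal_mul_sub_le_optCost hA hB hm
  have h_bound : α t ≤ s * -Real.log (μ.real A) :=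
    (ENNReal.ofReal_le_ofReal_iff (mul_nonneg s.coe_nonneg (neg_nonneg.2 h_log))).1 <|
      (ofReal_le_extRealFun α ht h_cost).trans ((h ν hν_prob).trans h_entropy)
  rw [← Real.log_le_iff_le_exp hpos, le_neg, div_le_iff₀' (by exact_mod_cast hs₀)]
  exact h_bound

end Transport

section Concentration

variable {X : Type*} [PseudoMetricSpace X] [MeasurableSpace X] [OpensMeasurableSpace X]

lemma tendsto_measureReal_compl_closedBall (μ : Measure X) [IsFiniteMeasure μ] (x₀ : X) :
    Tendsto (fun r => μ.real (closedBall x₀ r)ᶜ) atTop (𝓝 0) := by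
  have h_inter : ⋂ r, (closedBall x₀ r)ᶜ = ∅ :=
    eq_empty_of_forall_notMem fun x hx => mem_iInter.1 hx (dist x x₀) (mem_closedBall.2 le_rfl)
  have h_lim := tendsto_measure_iInter_atTop (μ := μ)
    (fun r => isClosed_closedBall.measurableSet.compl.nullMeasurableSet)
    (fun _ _ hrs => compl_subset_compl.2 (closedBall_subset_closedBall hrs))
    ⟨0, measure_ne_top μ (closedBall x₀ 0)ᶜ⟩
  rw [h_inter, measure_empty] at h_lim
  exact (ENNReal.tendsto_toReal zero_ne_top).comp h_lim

lemma TransportEntropyInequality.eventually_measureReal_le_dist_le_exp {α θ : ℝ → ℝ}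
    {μ : Measure X} [IsProbabilityMeasure μ]
    (h : TransportEntropyInequality α (fun x y => θ (dist x y)) μ)
    (hθ_mapsTo : MapsTo θ (Ici 0) (Ici 0)) (hθ_mono : MonotoneOn θ (Ici 0)) {δ κ : ℝ} (hδ : 0 ≤ δ)
    (hθ_scale : ∀ t, 0 ≤ t → θ (δ * t) ≤ κ * θ t) {s : ℝ≥0} (hs₀ : 0 < s) (hs₁ : s ≤ 1)
    (hκs : κ < s) (x₀ : X) :
    ∀ᶠ r in atTop, μ.real {x | r ≤ dist x x₀} ≤ Real.exp (-(α (θ (δ / 2 * r)) / s)) := by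
  obtain ⟨R, h_ball, hR⟩ := (((tendsto_measureReal_compl_closedBall μ x₀).eventually_lt_const
    (sub_pos.2 hκs)).and (eventually_ge_atTop 0)).exists
  filter_upwards [eventually_ge_atTop (2 * R)] with r hr
  have hr₀ : 0 ≤ r / 2 := by linarith
  have h_far : ∀ x ∈ {x | r ≤ dist x x₀}, ∀ y ∈ closedBall x₀ R, θ (r / 2) ≤ θ (dist x y) := by
    intro x (hx : r ≤ dist x x₀) y hy
    refine hθ_mono hr₀ dist_nonneg ?_
    linarith [dist_triangle x y x₀, mem_closedBall.1 hy]
  refine h.measureReal_le_exp (measurableSet_le measurable_const (by fun_prop))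
    isClosed_closedBall.measurableSet (hθ_mapsTo hr₀) h_far hs₀ hs₁
    (hθ_mapsTo (by rw [mem_Ici]; nlinarith)) ?_
  calc θ (δ / 2 * r) = θ (δ * (r / 2)) := by ring_nf
    _ ≤ κ * θ (r / 2) := hθ_scale _ hr₀
    _ ≤ (s - μ.real (closedBall x₀ R)ᶜ) * θ (r / 2) := by
        gcongr
        · exact hθ_mapsTo hr₀
        · linarith
    _ = θ (r / 2) * (s - μ.real (closedBall x₀ R)ᶜ) := mul_comm _ _

end Concentration

section Integrability

variable {X : Type*} [MeasurableSpace X] {μ : Measure X} [IsFiniteMeasure μ]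

lemma lintegral_ofReal_ne_top_of_tail_le_rpow {f : X → ℝ} (hf_nonneg : 0 ≤ᵐ[μ] f)
    (hf : AEMeasurable f μ) {q : ℝ} (hq : 1 < q)
    (h_tail : ∀ᶠ t in atTop, μ.real {x | t ≤ f x} ≤ t ^ (-q)) :
    ∫⁻ x, ENNReal.ofReal (f x) ∂μ ≠ ∞ := by
  obtain ⟨a, ha⟩ := eventually_atTop.1 (h_tail.and (eventually_gt_atTop 0))
  have h_head : ∫⁻ t in Ioc 0 a, μ {x | t ≤ f x} ≠ ∞ :=
    ((setLIntegral_mono' measurableSet_Ioc fun _ _ => measure_mono (subset_univ _)).trans_lt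
      (by rw [setLIntegral_const, Real.volume_Ioc]; finiteness)).ne
  have h_rest : ∫⁻ t in Ioi a, μ {x | t ≤ f x} ≠ ∞ := by
    refine ((setLIntegral_mono' measurableSet_Ioi fun t ht => ?_).trans_lt
      (integrableOn_Ioi_rpow_of_lt (neg_lt_neg hq) (ha a le_rfl).2).setLIntegral_lt_top).ne
    rw [← ofReal_measureReal]
    exact ENNReal.ofReal_le_ofReal (ha t (mem_Ioi.1 ht).le).1
  rw [lintegral_eq_lintegral_meas_le μ hf_nonneg hf, ← Ioc_union_Ioi_eq_Ioi (ha a le_rfl).2.le,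
    lintegral_union measurableSet_Ioi (Ioc_disjoint_Ioi le_rfl)]
  exact ENNReal.add_ne_top.2 ⟨h_head, h_rest⟩

lemma eventually_measureReal_le_of_tail_comp_le {f : X → ℝ} (hf : Measurable f) {G Φ : ℝ → ℝ}
    (hG : Monotone G) (hΦ : Antitone Φ) (hΦ_nonneg : 0 ≤ Φ)
    (h_tail : ∀ᶠ r in atTop, μ.real {x | r ≤ f x} ≤ Φ (G r)) :
    ∀ᶠ t in atTop, μ.real {x | t ≤ G (f x)} ≤ Φ t := by
  obtain ⟨r₀, hr₀⟩ := eventually_atTop.1 h_tail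
  filter_upwards [eventually_gt_atTop (G r₀)] with t ht
  have h_meas : MeasurableSet {r | t ≤ G r} := measurableSet_le measurable_const hG.measurable
  by_contra! h_lt
  -- A compact subset of the up-set `{r | t ≤ G r}` lies in `[a, ∞)` for its least element `a`,
  -- whether or not the up-set itself has one.
  have h_lt' : ENNReal.ofReal (Φ t) < μ.map f {r | t ≤ G r} := by
    rw [Measure.map_apply hf h_meas]
    exact (ENNReal.ofReal_lt_iff_lt_toReal (hΦ_nonneg t) (measure_ne_top _ _)).2 h_lt
  obtain ⟨K, hK_sub, hK, h_ltK⟩ := h_meas.exists_lt_isCompact_of_ne_top (measure_ne_top _ _) h_lt'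
  have hK_ne : K.Nonempty := nonempty_of_measure_ne_zero (pos_of_gt h_ltK).ne'
  obtain ⟨a, haK, ha⟩ := hK.exists_isLeast hK_ne
  have ht_a : t ≤ G a := hK_sub haK
  have h_le : μ.map f K ≤ ENNReal.ofReal (Φ t) :=
    calc μ.map f K ≤ μ.map f (Ici a) := measure_mono ha
      _ = ENNReal.ofReal (μ.real {x | a ≤ f x}) := by
          rw [Measure.map_apply hf measurableSet_Ici, ofReal_measureReal]; rfl
      _ ≤ ENNReal.ofReal (Φ t) := ENNReal.ofReal_le_ofReal <|
          (hr₀ a (hG.reflect_lt (ht.trans_le ht_a)).le).trans (hΦ ht_a)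
  exact h_ltK.not_ge h_le

lemma lintegral_exp_comp_ne_top_of_tail_le_exp {f : X → ℝ} (hf : Measurable f) {G : ℝ → ℝ}
    (hG : Monotone G) {q : ℝ} (hq : 1 < q)
    (h_tail : ∀ᶠ r in atTop, μ.real {x | r ≤ f x} ≤ Real.exp (-(q * G r))) :
    ∫⁻ x, ENNReal.ofReal (Real.exp (G (f x))) ∂μ ≠ ∞ := by
  have h_antitone : Antitone fun u => Real.exp (-(q * u)) := fun u v huv => by
    dsimp only
    gcongr
  have h_tail_G := eventually_measureReal_le_of_tail_comp_le hf hG h_antitone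
    (fun _ => (Real.exp_pos _).le) h_tail
  refine lintegral_ofReal_ne_top_of_tail_le_rpow (ae_of_all _ fun _ => (Real.exp_pos _).le)
    (Real.measurable_exp.comp (hG.measurable.comp hf)).aemeasurable hq ?_
  filter_upwards [Real.tendsto_log_atTop.eventually h_tail_G, eventually_gt_atTop 0] with t ht ht₀
  simpa only [Real.log_le_iff_le_exp ht₀, Real.rpow_def_of_pos ht₀, mul_neg, mul_comm q] using ht

end Integrability

lemma apply_smul_le_of_convexOn {E : Type*} [AddCommGroup E] [Module ℝ E] {S : Set E} {f : E → ℝ}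
    (hf : ConvexOn ℝ S f) (h_zero_mem : 0 ∈ S) (hf_zero : f 0 = 0) {a : ℝ} (ha₀ : 0 ≤ a)
    (ha₁ : a ≤ 1) {x : E} (hx : x ∈ S) : f (a • x) ≤ a * f x := by
  simpa [hf_zero] using hf.2 hx h_zero_mem ha₀ (sub_nonneg.2 ha₁) (add_sub_cancel a 1)

lemma apply_eq_self_of_surjOn_Ici {β : Type*} [PartialOrder β] {f : β → β} {a : β}
    (hf_mono : MonotoneOn f (Ici a)) (hf_mapsTo : MapsTo f (Ici a) (Ici a))
    (hf_surj : SurjOn f (Ici a) (Ici a)) : f a = a := by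
  obtain ⟨z, hz, hza⟩ := hf_surj self_mem_Ici
  exact ((hf_mono self_mem_Ici hz hz).trans_eq hza).antisymm (hf_mapsTo self_mem_Ici)

theorem transport_entropy_integrability_general {X : Type*} [PseudoMetricSpace X]
    [MeasurableSpace X] [OpensMeasurableSpace X] {α θ : ℝ → ℝ}
    (hθ_mapsTo : MapsTo θ (Ici 0) (Ici 0)) (hθ_mono : MonotoneOn θ (Ici 0)) {δ κ : ℝ} (hδ : 0 < δ)
    (hκ : κ < 1) (hθ_scale : ∀ t, 0 ≤ t → θ (δ * t) ≤ κ * θ t) (hα_mono : MonotoneOn α (Ici 0))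
    (μ : Measure X) [IsProbabilityMeasure μ]
    (hT : TransportEntropyInequality α (fun x y => θ (dist x y)) μ) (x₀ : X) :
    ∃ ε₀ : ℝ, 0 < ε₀ ∧ ∀ ε : ℝ, 0 < ε → ε ≤ ε₀ →
      ∫⁻ x, ENNReal.ofReal (Real.exp (α (θ (ε * dist x x₀)))) ∂μ ≠ ∞ := by
  obtain ⟨s, hs, hs₁⟩ := exists_between (max_lt hκ one_pos)
  obtain ⟨hκs, hs₀⟩ := max_lt_iff.1 hs
  lift s to ℝ≥0 using hs₀.le
  have h_mono : MonotoneOn (α ∘ θ) (Ici 0) := hα_mono.comp hθ_mono hθ_mapsTo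
  refine ⟨δ / 2, half_pos hδ, fun ε hε_pos hε_le => ?_⟩
  have hG : Monotone fun r => α (θ (ε * max r 0)) := fun r r' hr =>
    h_mono (mem_Ici.2 (by positivity)) (mem_Ici.2 (by positivity)) (by gcongr)
  have h_tail : ∀ᶠ r in atTop, μ.real {x | r ≤ dist x x₀}
      ≤ Real.exp (-((s : ℝ)⁻¹ * α (θ (ε * max r 0)))) := by
    filter_upwards [hT.eventually_measureReal_le_dist_le_exp hθ_mapsTo hθ_mono hδ.le hθ_scale
      (by exact_mod_cast hs₀) (by exact_mod_cast hs₁.le) hκs x₀, eventually_ge_atTop 0] with r h hr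
    refine h.trans ?_
    rw [div_eq_inv_mul, max_eq_left hr]
    gcongr
    exact h_mono (mem_Ici.2 (by positivity)) (mem_Ici.2 (by positivity)) (by gcongr)
  simpa using lintegral_exp_comp_ne_top_of_tail_le_exp (f := fun x => dist x x₀) (by fun_prop) hG
    ((one_lt_inv₀ hs₀).2 hs₁) h_tail

/-- Necessary integrability: if `μ` satisfies `α(𝒯_{θ∘d}(·,μ)) ≤ H(·|μ)` with `θ` a
convex increasing bijection of `[0,∞)` and `α` an increasing bijection of `[0,∞)`,
then for every `x₀` there is `ε₀ > 0` such that for all `0 < ε ≤ ε₀`,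
`∫ exp(α(θ(ε d(x,x₀)))) dμ(x) < ∞`. -/
theorem transport_entropy_integrability
    {X : Type*} [MetricSpace X] [CompleteSpace X] [TopologicalSpace.SeparableSpace X]
    [MeasurableSpace X] [BorelSpace X]
    (θ : ℝ → ℝ) (hθ_cvx : ConvexOn ℝ (Set.Ici 0) θ) (hθ_mono : MonotoneOn θ (Set.Ici 0))
    (hθ_bij : Set.BijOn θ (Set.Ici 0) (Set.Ici 0))
    (α : ℝ → ℝ) (hα_mono : MonotoneOn α (Set.Ici 0))
    (hα_bij : Set.BijOn α (Set.Ici 0) (Set.Ici 0))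
    (μ : Measure X) [IsProbabilityMeasure μ]
    (hT : ∀ ν : Measure X, IsProbabilityMeasure ν →
      extRealFun α (optCost (fun x y => θ (dist x y)) ν μ) ≤ relEntropy ν μ)
    (x₀ : X) :
    ∃ ε₀ : ℝ, 0 < ε₀ ∧ ∀ ε : ℝ, 0 < ε → ε ≤ ε₀ →
      ∫⁻ x, ENNReal.ofReal (Real.exp (α (θ (ε * dist x x₀)))) ∂μ ≠ ∞ := by
  have hθ_zero : θ 0 = 0 := apply_eq_self_of_surjOn_Ici hθ_mono hθ_bij.mapsTo hθ_bij.surjOn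
  have hθ_half : ∀ t, 0 ≤ t → θ (1 / 2 * t) ≤ 1 / 2 * θ t := fun _ =>
    apply_smul_le_of_convexOn hθ_cvx self_mem_Ici hθ_zero one_half_pos.le one_half_lt_one.le
  exact transport_entropy_integrability_general hθ_bij.mapsTo hθ_mono one_half_pos one_half_lt_one
    hθ_half hα_mono μ hT x₀
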